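/- arXiv:2412.06628 — 8 statements merged into one kernel-verified Lean document; each statement's English description precedes it below -/
import Mathlib

section
/- Let σ_y > 0, σ_{s1} > 0 and β_{01} ≠ 0 be real numbers and let ρ* ∈ [−1, 1]. Define v(ρ) = σ_y² + (1 − ρ²)β_{01}²σ_{s1}² and g(ρ) = −(1/2)·[ log v(ρ) + ( β_{01}²σ_{s1}²(ρ − ρ*)² + v(ρ*) ) / v(ρ) ] for ρ ∈ [−1, 1]. Then g is strictly increasing on [−1, ρ*) and strictly decreasing on (ρ*, 1]; in particular ρ* is the unique maximizer of g over [−1, 1]. -/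
/-- The derivative of the expected log-likelihood of a correlation `r`, with `c` the explained
variance, `a` the noise variance and `s` the true correlation. -/
lemma hasDerivAt_expected_logLikelihood (a c s r : ℝ) (hv : a + c * (1 - r ^ 2) ≠ 0) :
    HasDerivAt (fun x : ℝ => -(1 / 2) * (Real.log (a + c * (1 - x ^ 2)) +
        (c * (x - s) ^ 2 + (a + c * (1 - s ^ 2))) / (a + c * (1 - x ^ 2))))
      (c * (s - r) * (a + c + c * r ^ 2) / (a + c * (1 - r ^ 2)) ^ 2) r := by
  have hden : HasDerivAt (fun x : ℝ => a + c * (1 - x ^ 2)) (c * -(2 * r)) r := by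
    simpa using ((((hasDerivAt_id r).pow 2).const_sub 1).const_mul c).const_add a
  have hnum : HasDerivAt (fun x : ℝ => c * (x - s) ^ 2 + (a + c * (1 - s ^ 2)))
      (c * (2 * (r - s))) r := by
    simpa using ((((hasDerivAt_id r).sub_const s).pow 2).const_mul c).add_const
      (a + c * (1 - s ^ 2))
  refine (((hden.log hv).add (hnum.div hden hv)).const_mul (-(1 / 2))).congr_deriv ?_
  field_simp
  ring

/-- The expected per-observation log-likelihood `g` of the principal-strata
correlation `ρ` in the control arm is strictly increasing on `[-1, ρ*)`, strictly decreasing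
on `(ρ*, 1]`, and uniquely maximized over `[-1, 1]` at the true correlation `ρ*`. -/
theorem stmt0 (σy σs1 β01 ρstar : ℝ) (hσy : 0 < σy) (hσs1 : 0 < σs1) (hβ : β01 ≠ 0)
    (hρstar : ρstar ∈ Set.Icc (-1 : ℝ) 1)
    (v g : ℝ → ℝ)
    (hv : ∀ ρ, v ρ = σy ^ 2 + (1 - ρ ^ 2) * β01 ^ 2 * σs1 ^ 2)
    (hg : ∀ ρ, g ρ = -(1 / 2) *
      (Real.log (v ρ) + (β01 ^ 2 * σs1 ^ 2 * (ρ - ρstar) ^ 2 + v ρstar) / v ρ)) :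
    StrictMonoOn g (Set.Ico (-1 : ℝ) ρstar) ∧
    StrictAntiOn g (Set.Ioc ρstar (1 : ℝ)) ∧
    ∀ ρ ∈ Set.Icc (-1 : ℝ) 1, ρ ≠ ρstar → g ρ < g ρstar := by
  have hc : 0 < β01 ^ 2 * σs1 ^ 2 := by positivity
  have ha : 0 < σy ^ 2 := by positivity
  set c := β01 ^ 2 * σs1 ^ 2 with hc_def
  set a := σy ^ 2
  have hv' : ∀ ρ, v ρ = a + c * (1 - ρ ^ 2) := fun ρ => by rw [hv, hc_def]; ring
  have hpos : ∀ ρ ∈ Set.Icc (-1 : ℝ) 1, 0 < a + c * (1 - ρ ^ 2) := fun ρ hρ => by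
    have : 0 ≤ 1 - ρ ^ 2 := by nlinarith [hρ.1, hρ.2]
    positivity
  have hderiv : ∀ ρ ∈ Set.Icc (-1 : ℝ) 1, HasDerivAt g
      (c * (ρstar - ρ) * (a + c + c * ρ ^ 2) / (a + c * (1 - ρ ^ 2)) ^ 2) ρ := fun ρ hρ => by
    have hg' : g = fun x : ℝ => -(1 / 2) * (Real.log (a + c * (1 - x ^ 2)) +
        (c * (x - ρstar) ^ 2 + (a + c * (1 - ρstar ^ 2))) / (a + c * (1 - x ^ 2))) := by
      funext x
      rw [hg, hv', hv']
    rw [hg']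
    exact hasDerivAt_expected_logLikelihood a c ρstar ρ (hpos ρ hρ).ne'
  have hmono : StrictMonoOn g (Set.Icc (-1) ρstar) := by
    have hsub : Set.Icc (-1) ρstar ⊆ Set.Icc (-1 : ℝ) 1 := Set.Icc_subset_Icc_right hρstar.2
    refine strictMonoOn_of_deriv_pos (convex_Icc _ _)
      (fun x hx => (hderiv x (hsub hx)).continuousAt.continuousWithinAt) fun x hx => ?_
    have hx' := hsub (interior_subset hx)
    rw [interior_Icc] at hx
    rw [(hderiv x hx').deriv]
    have := hpos x hx'
    have := sub_pos.2 hx.2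
    positivity
  have hanti : StrictAntiOn g (Set.Icc ρstar 1) := by
    have hsub : Set.Icc ρstar 1 ⊆ Set.Icc (-1 : ℝ) 1 := Set.Icc_subset_Icc_left hρstar.1
    refine strictAntiOn_of_deriv_neg (convex_Icc _ _)
      (fun x hx => (hderiv x (hsub hx)).continuousAt.continuousWithinAt) fun x hx => ?_
    have hx' := hsub (interior_subset hx)
    rw [interior_Icc] at hx
    rw [(hderiv x hx').deriv]
    have := hpos x hx'
    exact div_neg_of_neg_of_pos (mul_neg_of_neg_of_pos
      (mul_neg_of_pos_of_neg hc (sub_neg.2 hx.1)) (by positivity)) (by positivity)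
  refine ⟨hmono.mono Set.Ico_subset_Icc_self, hanti.mono Set.Ioc_subset_Icc_self,
    fun ρ hρ hne => ?_⟩
  rcases hne.lt_or_gt with h | h
  · exact hmono ⟨hρ.1, h.le⟩ ⟨hρstar.1, le_rfl⟩ h
  · exact hanti ⟨le_rfl, hρstar.2⟩ ⟨h.le, hρ.2⟩ h
end

section
/- Let σ_y > 0, σ_{s1} > 0 and β_{01} ≠ 0 be real numbers and let ρ* ∈ (−1, 1). Define v(ρ) = σ_y² + (1 − ρ²)β_{01}²σ_{s1}² and g(ρ) = −(1/2)·[ log v(ρ) + ( β_{01}²σ_{s1}²(ρ − ρ*)² + v(ρ*) ) / v(ρ) ]. Then g is twice differentiable at ρ* and g''(ρ*) = −β_{01}²σ_{s1}²·( 1/v(ρ*) + 2ρ*²β_{01}²σ_{s1}²/v(ρ*)² ); that is, the per-observation Fisher information for ρ at ρ* in the control arm equals β_{01}²σ_{s1}²·{ 2ρ*²β_{01}²σ_{s1}²/(ζ_0 − ψ_0²)² + 1/(ζ_0 − ψ_0²) }, where ζ_0 − ψ_0² = v(ρ*). -/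
/-- The expected per-observation control-arm log-likelihood `g` of the
principal-strata correlation is twice differentiable at the true value `ρ*` with
`g''(ρ*) = -β01²σs1²·(1/v(ρ*) + 2ρ*²β01²σs1²/v(ρ*)²)`; equivalently, the per-observation
Fisher information `-g''(ρ*)` equals
`β01²σs1²·(2ρ*²β01²σs1²/(ζ0-ψ0²)² + 1/(ζ0-ψ0²))` with `ζ0 - ψ0² = v(ρ*)`. -/
theorem stmt1 (σy σs1 β01 ρstar : ℝ) (hσy : 0 < σy) (hσs1 : 0 < σs1) (hβ : β01 ≠ 0)
    (hρstar : ρstar ∈ Set.Ioo (-1 : ℝ) 1)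
    (v g : ℝ → ℝ)
    (hv : ∀ ρ, v ρ = σy ^ 2 + (1 - ρ ^ 2) * β01 ^ 2 * σs1 ^ 2)
    (hg : ∀ ρ, g ρ = -(1 / 2) *
      (Real.log (v ρ) + (β01 ^ 2 * σs1 ^ 2 * (ρ - ρstar) ^ 2 + v ρstar) / v ρ)) :
    DifferentiableAt ℝ g ρstar ∧ DifferentiableAt ℝ (deriv g) ρstar ∧
    deriv (deriv g) ρstar =
      -(β01 ^ 2 * σs1 ^ 2 *
        (1 / v ρstar + 2 * ρstar ^ 2 * β01 ^ 2 * σs1 ^ 2 / (v ρstar) ^ 2)) ∧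
    -(deriv (deriv g) ρstar) =
      β01 ^ 2 * σs1 ^ 2 *
        (2 * ρstar ^ 2 * β01 ^ 2 * σs1 ^ 2 / (v ρstar) ^ 2 + 1 / v ρstar) := by
  set c : ℝ := β01 ^ 2 * σs1 ^ 2 with hc
  have hv_deriv (ρ : ℝ) : HasDerivAt v (-(2 * c * ρ)) ρ := by
    have h := (((hasDerivAt_id ρ).pow 2).const_sub 1).mul_const c |>.const_add (σy ^ 2)
    refine (h.congr_of_eventuallyEq (.of_forall fun x => ?_)).congr_deriv ?_
    · simp only [hv, hc, id, Pi.pow_apply]; ring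
    · simp only [id]; ring
  have hv_pos : 0 < v ρstar := by
    have h : 0 ≤ 1 - ρstar ^ 2 := by nlinarith [hρstar.1, hρstar.2]
    rw [hv]
    positivity
  have hN_deriv (ρ : ℝ) : HasDerivAt (fun ρ => c * (ρ - ρstar) ^ 2 + v ρstar)
      (2 * c * (ρ - ρstar)) ρ := by
    have h := ((((hasDerivAt_id ρ).sub_const ρstar).pow 2).const_mul c).add_const (v ρstar)
    refine h.congr_deriv ?_
    simp only [id]; ring
  have hg_deriv (ρ : ℝ) (hρ : v ρ ≠ 0) : HasDerivAt g
      (-(1 / 2) * (-(2 * c * ρ) / v ρ + (2 * c * (ρ - ρstar) * v ρ -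
        (c * (ρ - ρstar) ^ 2 + v ρstar) * -(2 * c * ρ)) / v ρ ^ 2)) ρ := by
    have h := (((hv_deriv ρ).log hρ).add ((hN_deriv ρ).div (hv_deriv ρ) hρ)).const_mul (-(1 / 2))
    exact h.congr_of_eventuallyEq (.of_forall hg)
  have hg_deriv_eq : deriv g =ᶠ[nhds ρstar] fun ρ =>
      -(1 / 2) * (-(2 * c * ρ) / v ρ + (2 * c * (ρ - ρstar) * v ρ -
        (c * (ρ - ρstar) ^ 2 + v ρstar) * -(2 * c * ρ)) / v ρ ^ 2) := by
    filter_upwards [(hv_deriv ρstar).continuousAt.eventually_ne hv_pos.ne'] with ρ hρ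
    exact (hg_deriv ρ hρ).deriv
  have hg_deriv2 : HasDerivAt (deriv g)
      (-(c * (1 / v ρstar + 2 * ρstar ^ 2 * β01 ^ 2 * σs1 ^ 2 / v ρstar ^ 2))) ρstar := by
    have hlin : HasDerivAt (fun ρ : ℝ => -(2 * c * ρ)) (-(2 * c)) ρstar := by
      simpa using ((hasDerivAt_id ρstar).const_mul (2 * c)).fun_neg
    have hlin_sub : HasDerivAt (fun ρ : ℝ => 2 * c * (ρ - ρstar)) (2 * c) ρstar := by
      simpa using ((hasDerivAt_id ρstar).sub_const ρstar).const_mul (2 * c)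
    have h := ((hlin.div (hv_deriv ρstar) hv_pos.ne').add
      (((hlin_sub.mul (hv_deriv ρstar)).sub ((hN_deriv ρstar).mul hlin)).div
        ((hv_deriv ρstar).pow 2) (pow_ne_zero 2 hv_pos.ne'))).const_mul (-(1 / 2))
    refine (h.congr_of_eventuallyEq hg_deriv_eq).congr_deriv ?_
    have hcc : 2 * ρstar ^ 2 * β01 ^ 2 * σs1 ^ 2 = 2 * ρstar ^ 2 * c := by rw [hc]; ring
    have hne := hv_pos.ne'
    simp only [hcc, Pi.mul_apply, Pi.sub_apply, Pi.pow_apply]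
    field_simp
    ring
  refine ⟨(hg_deriv ρstar hv_pos.ne').differentiableAt, hg_deriv2.differentiableAt,
    hg_deriv2.deriv, ?_⟩
  rw [hg_deriv2.deriv]
  ring
end

section
/- Let σ_{s0} > 0, σ_{s1} > 0, ρ ∈ (−1, 1), and let V_0, V_1 be real numbers with 0 < V_0 ≤ V_1. Define S = { (b_{01}, b_{10}) ∈ ℝ² : there exists σ² ≥ 0 with (1 − ρ²)σ_{s1}² b_{01}² = V_0 − σ² and (1 − ρ²)σ_{s0}² b_{10}² = V_1 − σ² }. Then S = { (b_{01}, b_{10}) ∈ ℝ² : b_{01}² ≤ V_0 / ((1 − ρ²)σ_{s1}²), (V_1 − V_0)/((1 − ρ²)σ_{s0}²) ≤ b_{10}² ≤ V_1/((1 − ρ²)σ_{s0}²), and σ_{s0}²b_{10}² − σ_{s1}²b_{01}² = (V_1 − V_0)/(1 − ρ²) }. In particular, the set of possible values of b_{01} is the interval [−√(V_0/((1−ρ²)σ_{s1}²)), √(V_0/((1−ρ²)σ_{s1}²))] and the set of possible values of b_{10} is the union [−√(V_1/((1−ρ²)σ_{s0}²)), −√((V_1−V_0)/((1−ρ²)σ_{s0}²))]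 ∪ [√((V_1−V_0)/((1−ρ²)σ_{s0}²)), √(V_1/((1−ρ²)σ_{s0}²))]. -/
/-- The reals whose square lies in `[p, q]` form two symmetric intervals. -/
theorem mem_Icc_neg_sqrt_union_Icc_sqrt_iff {p q x : ℝ} (hq : 0 ≤ q) :
    x ∈ Set.Icc (-√q) (-√p) ∪ Set.Icc (√p) (√q) ↔ p ≤ x ^ 2 ∧ x ^ 2 ≤ q := by
  have hp : p ≤ x ^ 2 ↔ √p ≤ |x| := by
    rw [Real.sqrt_le_left (abs_nonneg x), sq_abs]
  rw [hp, Real.sq_le hq, le_abs, Set.mem_union, Set.mem_Icc, Set.mem_Icc]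
  have := Real.sqrt_nonneg p
  have := Real.sqrt_nonneg q
  constructor
  · rintro (⟨h₁, h₂⟩ | ⟨h₁, h₂⟩)
    · exact ⟨Or.inr (by linarith), h₁, by linarith⟩
    · exact ⟨Or.inl h₁, by linarith, h₂⟩
  · rintro ⟨h | h, h₁, h₂⟩
    · exact Or.inr ⟨h, h₂⟩
    · exact Or.inl ⟨h₁, by linarith⟩

/-- A nonnegative real is a positive multiple of a square. -/
theorem exists_mul_sq_eq {a y : ℝ} (ha : 0 < a) (hy : 0 ≤ y) : ∃ x : ℝ, a * x ^ 2 = y :=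
  ⟨√(y / a), by rw [Real.sq_sqrt (by positivity)]; field_simp⟩

/-- Proposition 1: the partial identification region of `(β01, β10)` with
known `ρ`, without further assumptions, together with the resulting regions for each
coordinate separately. -/
theorem stmt5 (σs0 σs1 ρ V0 V1 : ℝ) (hσs0 : 0 < σs0) (hσs1 : 0 < σs1)
    (hρ : ρ ∈ Set.Ioo (-1 : ℝ) 1) (hV0 : 0 < V0) (hV01 : V0 ≤ V1)
    (S : Set (ℝ × ℝ))
    (hS : S = {b : ℝ × ℝ | ∃ σ2 : ℝ, 0 ≤ σ2 ∧
      (1 - ρ ^ 2) * σs1 ^ 2 * b.1 ^ 2 = V0 - σ2 ∧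
      (1 - ρ ^ 2) * σs0 ^ 2 * b.2 ^ 2 = V1 - σ2}) :
    S = {b : ℝ × ℝ |
        b.1 ^ 2 ≤ V0 / ((1 - ρ ^ 2) * σs1 ^ 2) ∧
        (V1 - V0) / ((1 - ρ ^ 2) * σs0 ^ 2) ≤ b.2 ^ 2 ∧
        b.2 ^ 2 ≤ V1 / ((1 - ρ ^ 2) * σs0 ^ 2) ∧
        σs0 ^ 2 * b.2 ^ 2 - σs1 ^ 2 * b.1 ^ 2 = (V1 - V0) / (1 - ρ ^ 2)} ∧
    {b01 : ℝ | ∃ b10 : ℝ, (b01, b10) ∈ S} =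
      Set.Icc (-Real.sqrt (V0 / ((1 - ρ ^ 2) * σs1 ^ 2)))
        (Real.sqrt (V0 / ((1 - ρ ^ 2) * σs1 ^ 2))) ∧
    {b10 : ℝ | ∃ b01 : ℝ, (b01, b10) ∈ S} =
      Set.Icc (-Real.sqrt (V1 / ((1 - ρ ^ 2) * σs0 ^ 2)))
          (-Real.sqrt ((V1 - V0) / ((1 - ρ ^ 2) * σs0 ^ 2))) ∪
        Set.Icc (Real.sqrt ((V1 - V0) / ((1 - ρ ^ 2) * σs0 ^ 2)))
          (Real.sqrt (V1 / ((1 - ρ ^ 2) * σs0 ^ 2))) := by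
  have hc : 0 < 1 - ρ ^ 2 := by nlinarith [hρ.1, hρ.2]
  have hA : 0 < (1 - ρ ^ 2) * σs1 ^ 2 := by positivity
  have hB : 0 < (1 - ρ ^ 2) * σs0 ^ 2 := by positivity
  have hV1 : 0 ≤ V1 := by linarith
  subst hS
  refine ⟨?_, ?_, ?_⟩
  · ext ⟨x, y⟩
    simp only [Set.mem_ofPred_eq]
    rw [le_div_iff₀' hA, div_le_iff₀' hB, le_div_iff₀' hB, eq_div_iff hc.ne']
    constructor
    · rintro ⟨s, hs, hx, hy⟩
      have : 0 ≤ (1 - ρ ^ 2) * σs1 ^ 2 * x ^ 2 := by positivity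
      exact ⟨by linarith, by linarith, by linarith, by linarith⟩
    · rintro ⟨hx, -, -, hxy⟩
      exact ⟨V0 - (1 - ρ ^ 2) * σs1 ^ 2 * x ^ 2, by linarith, by ring, by linarith⟩
  · ext x
    rw [Set.mem_Icc, ← Real.sq_le (by positivity), le_div_iff₀' hA]
    simp only [Set.mem_ofPred_eq]
    constructor
    · rintro ⟨y, s, hs, hx, -⟩
      linarith
    · intro hx
      have : 0 ≤ (1 - ρ ^ 2) * σs1 ^ 2 * x ^ 2 := by positivity
      obtain ⟨y, hy⟩ := exists_mul_sq_eq hB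
        (show 0 ≤ V1 - (V0 - (1 - ρ ^ 2) * σs1 ^ 2 * x ^ 2) by linarith)
      exact ⟨y, V0 - (1 - ρ ^ 2) * σs1 ^ 2 * x ^ 2, by linarith, by ring, hy⟩
  · ext y
    rw [mem_Icc_neg_sqrt_union_Icc_sqrt_iff (by positivity), div_le_iff₀' hB, le_div_iff₀' hB]
    simp only [Set.mem_ofPred_eq]
    constructor
    · rintro ⟨x, s, hs, hx, hy⟩
      have : 0 ≤ (1 - ρ ^ 2) * σs1 ^ 2 * x ^ 2 := by positivity
      exact ⟨by linarith, by linarith⟩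
    · rintro ⟨hy, hy'⟩
      obtain ⟨x, hx⟩ := exists_mul_sq_eq hA
        (show 0 ≤ V0 - (V1 - (1 - ρ ^ 2) * σs0 ^ 2 * y ^ 2) by linarith)
      exact ⟨x, V1 - (1 - ρ ^ 2) * σs0 ^ 2 * y ^ 2, by linarith, hx, by ring⟩
end

section
/- Let σ_{s0} > 0, σ_{s1} > 0, ρ ∈ (−1, 1), and let V_0, V_1 be real numbers with 0 < V_0 ≤ V_1. Define S = { (b_{01}, b_{10}) ∈ ℝ² : there exists σ² ≥ 0 with (1 − ρ²)σ_{s1}² b_{01}² = V_0 − σ² and (1 − ρ²)σ_{s0}² b_{10}² = V_1 − σ² }. Then { (b_{01}, b_{10}) ∈ S : b_{01} ≥ 0 and b_{10} ≥ 0 } = { (b_{01}, b_{10}) ∈ ℝ² : 0 ≤ b_{01} ≤ √(V_0/((1 − ρ²)σ_{s1}²)), √((V_1 − V_0)/((1 − ρ²)σ_{s0}²)) ≤ b_{10} ≤ √(V_1/((1 − ρ²)σ_{s0}²)), and σ_{s0}²b_{10}² − σ_{s1}²b_{01}² = (V_1 − V_0)/(1 − ρ²) }. -/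
/-- Proposition 2: under the Same Sign assumption (restricting to
`b01 ≥ 0` and `b10 ≥ 0`), the partial identification region of `(β01, β10)`. -/
theorem stmt6 (σs0 σs1 ρ V0 V1 : ℝ) (hσs0 : 0 < σs0) (hσs1 : 0 < σs1)
    (hρ : ρ ∈ Set.Ioo (-1 : ℝ) 1) (hV0 : 0 < V0) (hV01 : V0 ≤ V1)
    (S : Set (ℝ × ℝ))
    (hS : S = {b : ℝ × ℝ | ∃ σ2 : ℝ, 0 ≤ σ2 ∧
      (1 - ρ ^ 2) * σs1 ^ 2 * b.1 ^ 2 = V0 - σ2 ∧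
      (1 - ρ ^ 2) * σs0 ^ 2 * b.2 ^ 2 = V1 - σ2}) :
    {b ∈ S | 0 ≤ b.1 ∧ 0 ≤ b.2} =
      {b : ℝ × ℝ |
        0 ≤ b.1 ∧ b.1 ≤ Real.sqrt (V0 / ((1 - ρ ^ 2) * σs1 ^ 2)) ∧
        Real.sqrt ((V1 - V0) / ((1 - ρ ^ 2) * σs0 ^ 2)) ≤ b.2 ∧
        b.2 ≤ Real.sqrt (V1 / ((1 - ρ ^ 2) * σs0 ^ 2)) ∧
        σs0 ^ 2 * b.2 ^ 2 - σs1 ^ 2 * b.1 ^ 2 = (V1 - V0) / (1 - ρ ^ 2)} := by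
  have hc : 0 < 1 - ρ ^ 2 := by nlinarith [hρ.1, hρ.2]
  have h0 : 0 < (1 - ρ ^ 2) * σs0 ^ 2 := by positivity
  have h1 : 0 < (1 - ρ ^ 2) * σs1 ^ 2 := by positivity
  subst hS
  ext ⟨x, y⟩
  simp only [Set.mem_ofPred_eq]
  constructor
  · rintro ⟨⟨σ2, hσ2, hx, hy⟩, hx0, hy0⟩
    have hxV : (1 - ρ ^ 2) * σs1 ^ 2 * x ^ 2 ≥ 0 := by positivity
    refine ⟨hx0, ?_, ?_, ?_, ?_⟩
    · rw [Real.le_sqrt hx0 (by positivity), le_div_iff₀ h1]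
      linarith
    · rw [Real.sqrt_le_iff, div_le_iff₀ h0]
      exact ⟨hy0, by linarith⟩
    · rw [Real.le_sqrt hy0 (div_nonneg (hV0.le.trans hV01) h0.le), le_div_iff₀ h0]
      linarith
    · rw [eq_div_iff hc.ne']
      linarith
  · rintro ⟨hx0, hx, hy, -, hxy⟩
    rw [Real.le_sqrt hx0 (by positivity), le_div_iff₀ h1] at hx
    rw [eq_div_iff hc.ne'] at hxy
    exact ⟨⟨V0 - (1 - ρ ^ 2) * σs1 ^ 2 * x ^ 2, by linarith, by ring, by linarith⟩,
      hx0, (Real.sqrt_nonneg _).trans hy⟩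
end

section
/- Let σ_{s0} > 0, σ_{s1} > 0, ρ ∈ (−1, 1), and let V_0, V_1, ζ_0, ζ_1 be real numbers with 0 < V_0 ≤ V_1, V_0 ≤ ζ_0, V_1 ≤ ζ_1, and V_0²/ζ_0 ≥ V_1²/ζ_1. Define S_dom = { (b_{01}, b_{10}) ∈ ℝ² : there exists σ² with σ² ≥ V_0²/ζ_0, σ² ≥ V_1²/ζ_1, (1 − ρ²)σ_{s1}² b_{01}² = V_0 − σ², and (1 − ρ²)σ_{s0}² b_{10}² = V_1 − σ² }. Then S_dom = { (b_{01}, b_{10}) ∈ ℝ² : b_{01}² ≤ V_0(ζ_0 − V_0)/(ζ_0(1 − ρ²)σ_{s1}²), (V_1 − V_0)/((1 − ρ²)σ_{s0}²) ≤ b_{10}² ≤ (V_1 − V_0²/ζ_0)/((1 − ρ²)σ_{s0}²), and σ_{s0}²b_{10}² − σ_{s1}²b_{01}² = (V_1 − V_0)/(1 − ρ²) }. -/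
/-- Proposition 3: under the Dominant Observed Effect assumption
(`σ² ≥ V_t²/ζ_t` for `t = 0, 1`), the partial identification region of `(β01, β10)`. -/
theorem stmt7 (σs0 σs1 ρ V0 V1 ζ0 ζ1 : ℝ) (hσs0 : 0 < σs0) (hσs1 : 0 < σs1)
    (hρ : ρ ∈ Set.Ioo (-1 : ℝ) 1) (hV0 : 0 < V0) (hV01 : V0 ≤ V1)
    (hV0ζ0 : V0 ≤ ζ0) (hV1ζ1 : V1 ≤ ζ1)
    (hdom : V1 ^ 2 / ζ1 ≤ V0 ^ 2 / ζ0)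
    (Sdom : Set (ℝ × ℝ))
    (hSdom : Sdom = {b : ℝ × ℝ | ∃ σ2 : ℝ,
      V0 ^ 2 / ζ0 ≤ σ2 ∧ V1 ^ 2 / ζ1 ≤ σ2 ∧
      (1 - ρ ^ 2) * σs1 ^ 2 * b.1 ^ 2 = V0 - σ2 ∧
      (1 - ρ ^ 2) * σs0 ^ 2 * b.2 ^ 2 = V1 - σ2}) :
    Sdom = {b : ℝ × ℝ |
      b.1 ^ 2 ≤ V0 * (ζ0 - V0) / (ζ0 * (1 - ρ ^ 2) * σs1 ^ 2) ∧
      (V1 - V0) / ((1 - ρ ^ 2) * σs0 ^ 2) ≤ b.2 ^ 2 ∧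
      b.2 ^ 2 ≤ (V1 - V0 ^ 2 / ζ0) / ((1 - ρ ^ 2) * σs0 ^ 2) ∧
      σs0 ^ 2 * b.2 ^ 2 - σs1 ^ 2 * b.1 ^ 2 = (V1 - V0) / (1 - ρ ^ 2)} := by
  have hr : 0 < 1 - ρ ^ 2 := by nlinarith [hρ.1, hρ.2]
  have hζ0 : 0 < ζ0 := hV0.trans_le hV0ζ0
  have h0 : 0 < (1 - ρ ^ 2) * σs0 ^ 2 := by positivity
  have h1 : 0 < (1 - ρ ^ 2) * σs1 ^ 2 := by positivity
  have hbound : V0 * (ζ0 - V0) / (ζ0 * (1 - ρ ^ 2) * σs1 ^ 2)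
      = (V0 - V0 ^ 2 / ζ0) / ((1 - ρ ^ 2) * σs1 ^ 2) := by
    field_simp
  subst hSdom
  ext ⟨x, y⟩
  simp only [Set.mem_ofPred_eq]
  rw [hbound, le_div_iff₀ h1, div_le_iff₀ h0, le_div_iff₀ h0, eq_div_iff hr.ne']
  constructor
  · rintro ⟨σ2, hσ0, -, hx, hy⟩
    have hx0 := mul_nonneg h1.le (sq_nonneg x)
    refine ⟨?_, ?_, ?_, ?_⟩ <;> linarith
  · rintro ⟨hx, -, -, hxy⟩
    refine ⟨V0 - (1 - ρ ^ 2) * σs1 ^ 2 * x ^ 2, ?_, ?_, ?_, ?_⟩ <;> linarith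
end

section
/- Let (Ω, F, P) be a probability space and let S : Ω → ℝ, X : Ω → ℝ^p, Z : Ω → ℝ, ε : Ω → ℝ be measurable, with ε independent of the triple (S, X, Z). Let M, N : ℝ × ℝ^p × ℝ → ℝ be measurable maps satisfying N(s, x, M(s, x, z)) = z and M(s, x, N(s, x, z)) = z for all (s, x, z), and suppose the pushforward of the law of (S, X, Z) under the map (s, x, z) ↦ (s, x, M(s, x, z)) equals the law of (S, X, Z). Let f : ℝ^p × ℝ × ℝ → ℝ be measurable and define Y = f(X, S, Z) + ε and Y' = f(X, S, N(S, X, Z)) + ε. Then the law of (Y', S, X) equals the law of (Y, S, X). -/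
open MeasureTheory ProbabilityTheory

/-- Replacing the second component of an independent pair by a measurable function of it with the
same law leaves the joint law of the pair unchanged. -/
theorem ProbabilityTheory.IndepFun.map_prodMk_comp_eq {Ω α β : Type*} [MeasurableSpace Ω]
    [MeasurableSpace α] [MeasurableSpace β] {P : Measure Ω} [IsFiniteMeasure P]
    {U : Ω → α} {T : Ω → β} (hU : Measurable U) (hT : Measurable T) (h : IndepFun U T P)
    {g : β → β} (hg : Measurable g) (hinv : P.map (g ∘ T) = P.map T) :
    P.map (fun ω => (U ω, g (T ω))) = P.map (fun ω => (U ω, T ω)) := by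
  have h' : IndepFun U (g ∘ T) P := h.comp measurable_id hg
  rw [indepFun_iff_map_prod_eq_prod_map_map hU.aemeasurable hT.aemeasurable] at h
  rw [indepFun_iff_map_prod_eq_prod_map_map hU.aemeasurable (hg.comp hT).aemeasurable, hinv] at h'
  exact h'.trans h.symm

/-- Theorem 3: replacing the unobserved intermediate `Z` by `N(S, X, Z)`
(the inverse of an invariant transformation `M` of the law of `(S, X, Z)`) inside the
outcome model produces the same observed-data law of `(Y, S, X)`. -/
theorem stmt11 {Ω : Type*} [MeasurableSpace Ω] (P : Measure Ω) [IsProbabilityMeasure P]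
    {p : ℕ}
    (S : Ω → ℝ) (X : Ω → (Fin p → ℝ)) (Z : Ω → ℝ) (ε : Ω → ℝ)
    (hS : Measurable S) (hX : Measurable X) (hZ : Measurable Z) (hε : Measurable ε)
    (hind : IndepFun ε (fun ω => (S ω, X ω, Z ω)) P)
    (M N : ℝ × (Fin p → ℝ) × ℝ → ℝ)
    (hM : Measurable M) (hN : Measurable N)
    (hNM : ∀ (s : ℝ) (x : Fin p → ℝ) (z : ℝ), N (s, x, M (s, x, z)) = z)
    (hMN : ∀ (s : ℝ) (x : Fin p → ℝ) (z : ℝ), M (s, x, N (s, x, z)) = z)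
    (hinv : Measure.map (fun ω => (S ω, X ω, M (S ω, X ω, Z ω))) P
      = Measure.map (fun ω => (S ω, X ω, Z ω)) P)
    (f : (Fin p → ℝ) × ℝ × ℝ → ℝ) (hf : Measurable f)
    (Y Y' : Ω → ℝ)
    (hY : ∀ ω, Y ω = f (X ω, S ω, Z ω) + ε ω)
    (hY' : ∀ ω, Y' ω = f (X ω, S ω, N (S ω, X ω, Z ω)) + ε ω) :
    Measure.map (fun ω => (Y' ω, S ω, X ω)) P
      = Measure.map (fun ω => (Y ω, S ω, X ω)) P := by
  have hT : Measurable fun ω => (S ω, X ω, Z ω) := by fun_prop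
  let g : ℝ × (Fin p → ℝ) × ℝ → ℝ × (Fin p → ℝ) × ℝ := fun t => (t.1, t.2.1, M t)
  have hg : Measurable g := by fun_prop
  let G : ℝ × (ℝ × (Fin p → ℝ) × ℝ) → ℝ × ℝ × (Fin p → ℝ) :=
    fun q => (f (q.2.2.1, q.2.1, N q.2) + q.1, q.2.1, q.2.2.1)
  have hG : Measurable G := by fun_prop
  have key := congrArg (Measure.map G) (hind.map_prodMk_comp_eq hε hT hg hinv)
  rw [Measure.map_map hG (by fun_prop), Measure.map_map hG (by fun_prop)] at key
  convert key.symm using 2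
  · funext ω
    simp [G, hY']
  · funext ω
    simp [G, g, hY, hNM]
end

section
/- Let λ_0, β_{00} be real, β_{01} ≠ 0 real, σ > 0, and p_{1·}, p_{·1} ∈ (0, 1). For y ∈ ℝ, s ∈ {0, 1}, and p ∈ [max(0, p_{1·} + p_{·1} − 1), min(p_{1·}, p_{·1})], define f_0(y, s | p) = (1/(√(2π)σ))·exp(−(y − λ_0 − β_{00}s)²/(2σ²))·[ (1 − p_{1·} − p_{·1} + p)^{1−s}(p_{1·} − p)^{s} + exp(−(β_{01}² − 2β_{01}(y − λ_0 − β_{00}s))/(2σ²))·(p_{·1} − p)^{1−s} p^{s} ]. If p and p' both lie in [max(0, p_{1·} + p_{·1} − 1), min(p_{1·}, p_{·1})] and f_0(y, s | p) = f_0(y, s | p') for all y ∈ ℝ and s ∈ {0, 1}, then p = p'. -/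
/-- in the binary-intermediate model, when principal ignorability fails in the
control arm (`β01 ≠ 0`), the control-arm observed-data density `f0(·, · | p)` determines the
association parameter `p = p11` within the Fréchet interval. -/
theorem stmt12 (lam0 β00 β01 σ p1 p2 : ℝ) (hβ : β01 ≠ 0) (hσ : 0 < σ)
    (hp1 : p1 ∈ Set.Ioo (0 : ℝ) 1) (hp2 : p2 ∈ Set.Ioo (0 : ℝ) 1)
    (f0 : ℝ → ℝ → ℝ → ℝ)
    (hf0 : ∀ y s p, f0 y s p =
      (1 / (Real.sqrt (2 * Real.pi) * σ)) *
        Real.exp (-(y - lam0 - β00 * s) ^ 2 / (2 * σ ^ 2)) *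
        ((1 - p1 - p2 + p) ^ ((1 : ℝ) - s) * (p1 - p) ^ (s : ℝ) +
          Real.exp (-(β01 ^ 2 - 2 * β01 * (y - lam0 - β00 * s)) / (2 * σ ^ 2)) *
            (p2 - p) ^ ((1 : ℝ) - s) * p ^ (s : ℝ)))
    (p p' : ℝ)
    (hp : p ∈ Set.Icc (max 0 (p1 + p2 - 1)) (min p1 p2))
    (hp' : p' ∈ Set.Icc (max 0 (p1 + p2 - 1)) (min p1 p2))
    (heq : ∀ y : ℝ, ∀ s ∈ ({0, 1} : Set ℝ), f0 y s p = f0 y s p') :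
    p = p' := by
  -- At `y = lam0 + β00 + β01` and `s = 1` the weight of the second component exceeds one.
  have h := heq (lam0 + β00 + β01) 1 (by simp)
  have hy : lam0 + β00 + β01 - lam0 - β00 * 1 = β01 := by ring
  have hc : 1 / (Real.sqrt (2 * Real.pi) * σ) * Real.exp (-β01 ^ 2 / (2 * σ ^ 2)) ≠ 0 := by
    positivity
  rw [hf0, hf0, hy] at h
  have h' := mul_left_cancel₀ hc h
  simp only [sub_self, Real.rpow_zero, Real.rpow_one, one_mul, mul_one] at h'
  have hE : 1 < Real.exp (-(β01 ^ 2 - 2 * β01 * β01) / (2 * σ ^ 2)) := by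
    rw [Real.one_lt_exp_iff, show -(β01 ^ 2 - 2 * β01 * β01) = β01 ^ 2 by ring]
    positivity
  exact mul_left_cancel₀ (sub_pos.mpr hE).ne' (by linarith)
end

section
/- Let σ_0, σ_1 > 0 with σ_0 ≠ σ_1, let a_0, a_1 be real numbers, let b_0, b_1 < 0, and let c_0, c_1 > 0. For j ∈ {0, 1} define F_j(y) = (1/(√(2π)σ_j))·exp(−(y − a_j)²/(2σ_j²))·( 1 + c_j·exp(−(b_j² − 2b_j(y − a_j))/(2σ_j²)) ). Then there exists y ∈ ℝ such that F_0(y) ≠ F_1(y). -/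
open Filter Topology

/-- The bracketed factor of the density tends to `1` at `+∞` when the shift `b` is negative. -/
theorem tendsto_one_add_mul_exp_shift {σ b : ℝ} (a c : ℝ) (hσ : 0 < σ) (hb : b < 0) :
    Tendsto (fun y : ℝ => 1 + c * Real.exp (-(b ^ 2 - 2 * b * (y - a)) / (2 * σ ^ 2)))
      atTop (𝓝 1) := by
  have hlin : Tendsto (fun y : ℝ => -(b ^ 2 - 2 * b * (y - a)) / (2 * σ ^ 2)) atTop atBot := by
    have hslope : b / σ ^ 2 < 0 := div_neg_of_neg_of_pos hb (by positivity)
    refine (tendsto_atBot_add_const_right atTop (-(b ^ 2 + 2 * b * a) / (2 * σ ^ 2))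
      (tendsto_id.const_mul_atTop_of_neg hslope)).congr fun y => ?_
    simp only [id]
    field_simp
    ring
  simpa using ((Real.tendsto_exp_atBot.comp hlin).const_mul c).const_add 1

/-- The Gaussian tail rate `-1 / (2 * σ ^ 2)` is recovered from the density as the limit of
`log F y / y ^ 2` at `+∞`. -/
theorem tendsto_log_density_div_sq {σ b c : ℝ} (a : ℝ) (hσ : 0 < σ) (hb : b < 0) (hc : 0 < c)
    {F : ℝ → ℝ}
    (hF : ∀ y, F y = (1 / (Real.sqrt (2 * Real.pi) * σ)) *
      Real.exp (-(y - a) ^ 2 / (2 * σ ^ 2)) *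
      (1 + c * Real.exp (-(b ^ 2 - 2 * b * (y - a)) / (2 * σ ^ 2)))) :
    Tendsto (fun y => Real.log (F y) / y ^ 2) atTop (𝓝 (-1 / (2 * σ ^ 2))) := by
  have hK : 0 < 1 / (Real.sqrt (2 * Real.pi) * σ) := by positivity
  set K := 1 / (Real.sqrt (2 * Real.pi) * σ)
  have hsq : Tendsto (fun y : ℝ => y ^ 2) atTop atTop := tendsto_pow_atTop two_ne_zero
  have hconst : Tendsto (fun y : ℝ => Real.log K / y ^ 2) atTop (𝓝 0) :=
    hsq.const_div_atTop _
  have hbracket := ((tendsto_one_add_mul_exp_shift a c hσ hb).log one_ne_zero).div_atTop hsq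
  have hgauss : Tendsto (fun y : ℝ => -(1 - a / y) ^ 2 / (2 * σ ^ 2)) atTop
      (𝓝 (-1 / (2 * σ ^ 2))) := by
    simpa using (((tendsto_id.const_div_atTop a).const_sub 1).pow 2).neg.div_const (2 * σ ^ 2)
  have hsum := (hconst.add hgauss).add hbracket
  rw [zero_add, add_zero] at hsum
  refine hsum.congr' ?_
  filter_upwards [eventually_gt_atTop 0] with y hy
  rw [hF, Real.log_mul (by positivity) (by positivity), Real.log_mul hK.ne' (Real.exp_pos _).ne',
    Real.log_exp, add_div, add_div]
  congr 2
  field_simp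

/-- two binary-intermediate observed-data densities of the displayed form with
different residual standard deviations `σ0 ≠ σ1` cannot coincide as functions of `y`. -/
theorem stmt13 (σ0 σ1 a0 a1 b0 b1 c0 c1 : ℝ)
    (hσ0 : 0 < σ0) (hσ1 : 0 < σ1) (hne : σ0 ≠ σ1)
    (hb0 : b0 < 0) (hb1 : b1 < 0) (hc0 : 0 < c0) (hc1 : 0 < c1)
    (F0 F1 : ℝ → ℝ)
    (hF0 : ∀ y, F0 y = (1 / (Real.sqrt (2 * Real.pi) * σ0)) *
      Real.exp (-(y - a0) ^ 2 / (2 * σ0 ^ 2)) *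
      (1 + c0 * Real.exp (-(b0 ^ 2 - 2 * b0 * (y - a0)) / (2 * σ0 ^ 2))))
    (hF1 : ∀ y, F1 y = (1 / (Real.sqrt (2 * Real.pi) * σ1)) *
      Real.exp (-(y - a1) ^ 2 / (2 * σ1 ^ 2)) *
      (1 + c1 * Real.exp (-(b1 ^ 2 - 2 * b1 * (y - a1)) / (2 * σ1 ^ 2)))) :
    ∃ y : ℝ, F0 y ≠ F1 y := by
  by_contra! h
  have hlim1 := tendsto_log_density_div_sq a1 hσ1 hb1 hc1 hF1
  rw [← funext h] at hlim1
  have hrate := tendsto_nhds_unique (tendsto_log_density_div_sq a0 hσ0 hb0 hc0 hF0) hlim1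
  field_simp at hrate
  exact hne ((pow_left_inj₀ hσ0.le hσ1.le two_ne_zero).1 (by linarith))
end
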